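/- arXiv:2107.14032 — 3 statements merged into one kernel-verified Lean document; each statement's English description precedes it below -/
import Mathlib

section
/- For every positive integer n, the Lebesgue volume of the unit ball B^n(1) in ℝ^n equals (π^{n/2−1}/2) · lim_{ε→0⁺} ∫_ℝ e^{ik}·(ε + ik)^{−(n/2+1)} dk, where the complex power is the principal branch. -/
open MeasureTheory Filter Topology

/-!
For `0 < re z` the function `t ↦ t ^ (s - 1) e ^ (-z t)` on `(0, ∞)`, extended by zero, has integral
`Γ(s) z ^ (-s)`; multiplying it by `e ^ (-i k t)` only shifts `z`, so its Fourier transform at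
frequency `k` is `Γ(s) (z + i k) ^ (-s)`. When `1 < re s` the latter is integrable, and Fourier
inversion gives `∫ e ^ (i k t) (z + i k) ^ (-s) dk = 2π t ^ (s - 1) e ^ (-z t) / Γ(s)` for `0 < t`.
At `t = 1`, `z = ε → 0⁺` and `s = n / 2 + 1` the right-hand side tends to `2π / Γ(n / 2 + 1)`, which
is the volume `π ^ (n / 2) / Γ(n / 2 + 1)` of the unit ball up to the factor `π ^ (n / 2 - 1) / 2`.
-/

section GammaKernel

open Complex Set
open scoped FourierTransform Real

/-- The unnormalized Gamma density with complex shape `s` and complex rate `z`, extended by zero to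
the negative axis. Its Fourier transform is a complex power on a vertical line. -/
noncomputable def gammaKernel (s z : ℂ) : ℝ → ℂ :=
  (Ioi 0).indicator fun t => (t : ℂ) ^ (s - 1) * cexp (-(z * t))

variable {s z w : ℂ} {t : ℝ}

lemma gammaKernel_of_pos (ht : 0 < t) : gammaKernel s z t = (t : ℂ) ^ (s - 1) * cexp (-(z * t)) :=
  indicator_of_mem (mem_Ioi.2 ht) _

lemma gammaKernel_of_nonpos (ht : t ≤ 0) : gammaKernel s z t = 0 :=
  indicator_of_notMem (notMem_Ioi.2 ht) _

lemma gammaKernel_zero_one (s : ℂ) : gammaKernel s 0 1 = 1 := by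
  simp [gammaKernel_of_pos one_pos]

lemma cexp_neg_mul_mul_gammaKernel (s z w : ℂ) (t : ℝ) :
    cexp (-(w * t)) * gammaKernel s z t = gammaKernel s (z + w) t := by
  rcases le_or_gt t 0 with ht | ht
  · simp only [gammaKernel_of_nonpos ht, mul_zero]
  · rw [gammaKernel_of_pos ht, gammaKernel_of_pos ht, mul_left_comm, ← Complex.exp_add]
    ring_nf

lemma norm_gammaKernel (s z : ℂ) : (‖gammaKernel s z ·‖) =
    (Ioi 0).indicator fun t : ℝ => t ^ (s.re - 1) * Real.exp (-z.re * t) := by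
  ext t
  rcases le_or_gt t 0 with ht | ht
  · simp [gammaKernel_of_nonpos ht, ht]
  · simp [gammaKernel_of_pos ht, ht, norm_cpow_eq_rpow_re_of_pos ht, Complex.norm_exp]

lemma norm_gammaKernel_le_of_re_le (h : w.re ≤ z.re) (s : ℂ) (t : ℝ) :
    ‖gammaKernel s z t‖ ≤ ‖gammaKernel s w t‖ := by
  rw [congrFun (norm_gammaKernel s z) t, congrFun (norm_gammaKernel s w) t]
  refine indicator_le_indicator' fun ht => ?_
  have ht : 0 < t := ht
  gcongr

lemma measurable_gammaKernel (s z : ℂ) : Measurable (gammaKernel s z) :=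
  Measurable.indicator (by fun_prop) measurableSet_Ioi

lemma integrable_gammaKernel (hs : 0 < s.re) (hz : 0 < z.re) : Integrable (gammaKernel s z) := by
  rw [← integrable_norm_iff (measurable_gammaKernel s z).aestronglyMeasurable, norm_gammaKernel,
    integrable_indicator_iff measurableSet_Ioi]
  simpa using integrableOn_rpow_mul_exp_neg_mul_rpow (by linarith : -1 < s.re - 1) one_pos hz

lemma continuous_gammaKernel (hs : 1 < s.re) (z : ℂ) : Continuous (gammaKernel s z) := by
  have hs' : 0 < (s - 1).re := by simpa using hs
  have hpow : Continuous fun t : ℝ => (t : ℂ) ^ (s - 1) := continuous_ofReal_cpow_const hs'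
  refine Continuous.indicator (fun t ht => ?_) (by fun_prop)
  have hne : s - 1 ≠ 0 := fun h => hs'.ne' (by simp [h])
  obtain rfl : t = 0 := by simpa using ht
  simp [hne]

lemma hasDerivAt_gammaKernel_rate (s z : ℂ) (t : ℝ) :
    HasDerivAt (gammaKernel s · t) (-gammaKernel (s + 1) z t) z := by
  rcases le_or_gt t 0 with ht | ht
  · simpa only [gammaKernel_of_nonpos ht, neg_zero] using hasDerivAt_const z (0 : ℂ)
  · simp only [gammaKernel_of_pos ht]
    have hexp : HasDerivAt (fun w : ℂ => cexp (-(w * t))) (cexp (-(z * t)) * -t) z := by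
      simpa using ((hasDerivAt_id' z).mul_const (t : ℂ)).fun_neg.cexp
    have hpow : (t : ℂ) ^ (s + 1 - 1) = t ^ (s - 1) * t := by
      rw [add_sub_right_comm, cpow_add _ _ (ofReal_ne_zero.2 ht.ne'), cpow_one]
    convert! hexp.const_mul ((t : ℂ) ^ (s - 1)) using 1
    rw [hpow]
    ring

lemma hasDerivAt_integral_gammaKernel_rate (hs : 0 < s.re) (hz : 0 < z.re) :
    HasDerivAt (fun w => ∫ t, gammaKernel s w t) (∫ t, -gammaKernel (s + 1) z t) z := by
  have hopen : IsOpen {w : ℂ | z.re / 2 < w.re} := isOpen_lt continuous_const continuous_re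
  refine (hasDerivAt_integral_of_dominated_loc_of_deriv_le
    (F' := fun w t => -gammaKernel (s + 1) w t)
    (bound := fun t => ‖gammaKernel (s + 1) (z / 2) t‖)
    (hopen.mem_nhds (half_lt_self hz))
    (.of_forall fun w => (measurable_gammaKernel s w).aestronglyMeasurable)
    (integrable_gammaKernel hs hz) (measurable_gammaKernel _ z).neg.aestronglyMeasurable
    (.of_forall fun t w hw => ?_)
    (integrable_gammaKernel (by simp; linarith) (by simpa using hz)).norm
    (.of_forall fun t w _ => hasDerivAt_gammaKernel_rate s w t)).2
  rw [norm_neg]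
  exact norm_gammaKernel_le_of_re_le (by simpa using hw.le) _ t

lemma integral_gammaKernel_ofReal {r : ℝ} (hs : 0 < s.re) (hr : 0 < r) :
    ∫ t, gammaKernel s r t = (r : ℂ) ^ (-s) * Gamma s := by
  have harg : (r : ℂ).arg ≠ π := by simpa [arg_ofReal_of_nonneg hr.le] using Real.pi_ne_zero.symm
  rw [gammaKernel, integral_indicator measurableSet_Ioi, integral_cpow_mul_exp_neg_mul_Ioi hs hr,
    one_div, inv_cpow _ _ harg, cpow_neg]

-- Both sides are holomorphic in `z` on the right half-plane and agree on the positive real axis.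
lemma integral_gammaKernel (hs : 0 < s.re) (hz : 0 < z.re) :
    ∫ t, gammaKernel s z t = z ^ (-s) * Gamma s := by
  have hU : IsOpen {w : ℂ | 0 < w.re} := isOpen_lt continuous_const continuous_re
  have hconn : IsPreconnected {w : ℂ | 0 < w.re} := (convex_halfSpace_re_gt 0).isPreconnected
  have hleft : AnalyticOnNhd ℂ (fun w => ∫ t, gammaKernel s w t) {w | 0 < w.re} :=
    DifferentiableOn.analyticOnNhd (fun w hw => (hasDerivAt_integral_gammaKernel_rate hs
      hw).differentiableAt.differentiableWithinAt) hU
  have hright : AnalyticOnNhd ℂ (fun w => w ^ (-s) * Gamma s) {w | 0 < w.re} :=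
    DifferentiableOn.analyticOnNhd (fun w hw => ((differentiableAt_id.cpow_const
      (Or.inl hw)).mul_const _).differentiableWithinAt) hU
  have htend : Tendsto ((↑) : ℝ → ℂ) (𝓝[≠] 1) (𝓝[≠] 1) := by
    exact_mod_cast (continuous_ofReal.tendsto 1).inf
      (tendsto_principal_principal.2 fun r hr => ofReal_injective.ne hr)
  have hreal : ∀ᶠ r : ℝ in 𝓝[≠] 1, ∫ t, gammaKernel s r t = (r : ℂ) ^ (-s) * Gamma s := by
    filter_upwards [nhdsWithin_le_nhds (lt_mem_nhds one_pos)] with r hr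
    exact integral_gammaKernel_ofReal hs hr
  exact hleft.eqOn_of_preconnected_of_frequently_eq hright hconn (z₀ := 1) (by simp)
    (htend.frequently hreal.frequently) hz

lemma fourier_gammaKernel (hs : 0 < s.re) (hz : 0 < z.re) (x : ℝ) :
    𝓕 (gammaKernel s z) x = (z + I * (2 * π * x : ℝ)) ^ (-s) * Gamma s := by
  rw [Real.fourier_eq', ← integral_gammaKernel hs (by simpa using hz)]
  congr 1 with t
  rw [smul_eq_mul, ← cexp_neg_mul_mul_gammaKernel]
  congr 2
  simp
  ring

lemma one_add_abs_le_mul_norm_add_I_mul (hz : 0 < z.re) (k : ℝ) :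
    1 + |k| ≤ (1 + (1 + ‖z‖) / z.re) * ‖z + I * k‖ := by
  have hre : z.re ≤ ‖z + I * k‖ := by simpa using re_le_norm (z + I * k)
  have hk : |k| ≤ ‖z + I * k‖ + ‖z‖ := by
    simpa using norm_sub_le (z + I * k) z
  calc 1 + |k| ≤ ‖z + I * k‖ + (1 + ‖z‖) / z.re * z.re := by
        rw [div_mul_cancel₀ _ hz.ne']
        linarith
    _ ≤ ‖z + I * k‖ + (1 + ‖z‖) / z.re * ‖z + I * k‖ := by gcongr
    _ = (1 + (1 + ‖z‖) / z.re) * ‖z + I * k‖ := by ring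

lemma norm_add_I_mul_rpow_neg_isBigO_one_add_norm_rpow_neg {σ : ℝ} (hσ : 0 ≤ σ) (hz : 0 < z.re) :
    (fun k : ℝ => ‖z + I * k‖ ^ (-σ)) =O[⊤] fun k : ℝ => (1 + ‖k‖) ^ (-σ) := by
  set C : ℝ := 1 + (1 + ‖z‖) / z.re
  have hC : 0 < C := by positivity
  refine Asymptotics.IsBigO.of_bound (C ^ σ) (.of_forall fun k => ?_)
  rw [Real.norm_of_nonneg (by positivity), Real.norm_of_nonneg (by positivity)]
  calc ‖z + I * k‖ ^ (-σ) = C ^ σ * (C * ‖z + I * k‖) ^ (-σ) := by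
        rw [Real.mul_rpow hC.le (norm_nonneg _), ← mul_assoc, ← Real.rpow_add hC, add_neg_cancel,
          Real.rpow_zero, one_mul]
    _ ≤ C ^ σ * (1 + ‖k‖) ^ (-σ) := by
        gcongr ?_ * ?_
        exact Real.rpow_le_rpow_of_nonpos (by positivity) (one_add_abs_le_mul_norm_add_I_mul hz k)
          (neg_nonpos.2 hσ)

lemma integrable_add_I_mul_cpow_neg (hs : 1 < s.re) (hz : 0 < z.re) :
    Integrable fun k : ℝ => (z + I * k) ^ (-s) := by
  have hcont : Continuous fun k : ℝ => (z + I * k) ^ (-s) :=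
    Continuous.cpow (by fun_prop) continuous_const fun k => Or.inl (by simpa using hz)
  have hcpow : (fun k : ℝ => (z + I * k) ^ (-s)) =O[⊤] fun k : ℝ => ‖z + I * k‖ ^ (-s.re) :=
    (isTheta_cpow_const_rpow fun h => absurd h (by simp; linarith)).isBigO
  have hdecay := hcpow.trans
    (norm_add_I_mul_rpow_neg_isBigO_one_add_norm_rpow_neg (by linarith : 0 ≤ s.re) hz)
  exact hdecay.integrable hcont.aestronglyMeasurable (integrable_one_add_norm (by simpa using hs))

lemma integral_cexp_mul_add_I_mul_cpow_neg (hs : 1 < s.re) (hz : 0 < z.re) (t : ℝ) :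
    ∫ k : ℝ, cexp (I * k * t) * (z + I * k) ^ (-s) = 2 * π / Gamma s * gammaKernel s z t := by
  have hs₀ : 0 < s.re := one_pos.trans hs
  have hpi : 0 < 2 * π := Real.two_pi_pos
  have hΓ : Gamma s ≠ 0 := Gamma_ne_zero_of_re_pos hs₀
  have hfourier : 𝓕 (gammaKernel s z) = fun x : ℝ => (z + I * (2 * π * x : ℝ)) ^ (-s) * Gamma s :=
    funext (fourier_gammaKernel hs₀ hz)
  have hint : Integrable (𝓕 (gammaKernel s z)) := hfourier ▸
    ((integrable_add_I_mul_cpow_neg hs hz).comp_mul_left' hpi.ne').mul_const _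
  have hinv : gammaKernel s z t =
      (2 * π : ℂ)⁻¹ * (∫ k : ℝ, cexp (I * k * t) * (z + I * k) ^ (-s)) * Gamma s := by
    calc gammaKernel s z t = 𝓕⁻ (𝓕 (gammaKernel s z)) t :=
          (congrFun ((continuous_gammaKernel hs z).fourierInv_fourier_eq
            (integrable_gammaKernel hs₀ hz) hint) t).symm
      _ = ∫ x : ℝ, cexp (I * (2 * π * x : ℝ) * t) * (z + I * (2 * π * x : ℝ)) ^ (-s) * Gamma s := by
          rw [hfourier, Real.fourierInv_eq']
          congr 1 with x
          have hphase : ((2 * π * inner ℝ x t : ℝ) : ℂ) * I = I * (2 * π * x : ℝ) * t := by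
            simp
            ring
          rw [hphase, smul_eq_mul, ← mul_assoc]
      _ = _ := by
          rw [integral_mul_const, Measure.integral_comp_mul_left
            (fun k : ℝ => cexp (I * k * t) * (z + I * k) ^ (-s)), abs_of_pos (inv_pos.2 hpi)]
          simp
  rw [div_mul_eq_mul_div, eq_div_iff hΓ, hinv, mul_assoc (2 * π : ℂ)⁻¹,
    mul_inv_cancel_left₀ (mod_cast hpi.ne')]

lemma tendsto_integral_cexp_mul_add_I_mul_cpow_neg (hs : 1 < s.re) (t : ℝ) :
    Tendsto (fun ε : ℝ => ∫ k : ℝ, cexp (I * k * t) * (ε + I * k) ^ (-s)) (𝓝[>] 0)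
      (𝓝 (2 * π / Gamma s * gammaKernel s 0 t)) := by
  have hrate : Tendsto (fun ε : ℝ => gammaKernel s ε t) (𝓝[>] 0) (𝓝 (gammaKernel s 0 t)) :=
    (hasDerivAt_gammaKernel_rate s 0 t).continuousAt.tendsto.comp
      ((continuous_ofReal.tendsto' 0 0 ofReal_zero).mono_left nhdsWithin_le_nhds)
  refine (hrate.const_mul _).congr' ?_
  filter_upwards [self_mem_nhdsWithin] with ε hε
  exact (integral_cexp_mul_add_I_mul_cpow_neg hs (by simpa using hε) t).symm

end GammaKernel

lemma toReal_volume_closedBall_euclideanSpace {ι : Type*} [Nonempty ι] [Fintype ι]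
    (x : EuclideanSpace ℝ ι) {r : ℝ} (hr : 0 ≤ r) :
    (volume (Metric.closedBall x r)).toReal =
      r ^ Fintype.card ι * (Real.pi ^ ((Fintype.card ι : ℝ) / 2) /
        Real.Gamma (Fintype.card ι / 2 + 1)) := by
  have hsqrt : √Real.pi ^ Fintype.card ι = Real.pi ^ ((Fintype.card ι : ℝ) / 2) := by
    rw [Real.sqrt_eq_rpow, ← Real.rpow_mul_natCast Real.pi_pos.le]
    ring_nf
  rw [EuclideanSpace.volume_closedBall, hsqrt, ENNReal.toReal_mul, ENNReal.toReal_pow,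
    ENNReal.toReal_ofReal hr, ENNReal.toReal_ofReal (by positivity)]

/-- For every positive integer `n`, the volume of the unit ball in `ℝ^n` equals
`(π^{n/2−1}/2) · lim_{ε→0⁺} ∫_ℝ e^{ik} (ε + ik)^{−(n/2+1)} dk` (the limit exists). -/
theorem volume_unit_ball_eq_limit_integral (n : ℕ) (hn : 0 < n) :
    (∃ L : ℂ, Tendsto (fun ε : ℝ =>
        ∫ k : ℝ, Complex.exp (Complex.I * k) *
          ((ε : ℂ) + Complex.I * k) ^ (-((n : ℂ) / 2 + 1))) (𝓝[>] 0) (𝓝 L)) ∧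
    ((volume (Metric.closedBall (0 : EuclideanSpace ℝ (Fin n)) 1)).toReal : ℂ) =
      (Real.pi : ℂ) ^ ((n : ℂ) / 2 - 1) / 2 *
        limUnder (𝓝[>] (0 : ℝ)) (fun ε : ℝ =>
          ∫ k : ℝ, Complex.exp (Complex.I * k) *
            ((ε : ℂ) + Complex.I * k) ^ (-((n : ℂ) / 2 + 1))) := by
  have : NeZero n := ⟨hn.ne'⟩
  have hs : 1 < ((n : ℂ) / 2 + 1).re := by simpa using hn
  have hlim := tendsto_integral_cexp_mul_add_I_mul_cpow_neg hs 1
  simp only [Complex.ofReal_one, mul_one, gammaKernel_zero_one] at hlim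
  have hvol : ((volume (Metric.closedBall (0 : EuclideanSpace ℝ (Fin n)) 1)).toReal : ℂ) =
      (Real.pi : ℂ) ^ ((n : ℂ) / 2) / Complex.Gamma ((n : ℂ) / 2 + 1) := by
    rw [toReal_volume_closedBall_euclideanSpace 0 zero_le_one, Fintype.card_fin, one_pow, one_mul]
    push_cast [Complex.ofReal_cpow Real.pi_pos.le, ← Complex.Gamma_ofReal]
    rfl
  have hpi : (Real.pi : ℂ) ≠ 0 := Complex.ofReal_ne_zero.2 Real.pi_ne_zero
  refine ⟨⟨_, hlim⟩, ?_⟩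
  rw [hlim.limUnder_eq, hvol, Complex.cpow_sub _ _ hpi, Complex.cpow_one]
  field_simp
end

section
/- For every natural number k, lim_{ε→0⁺} (1/(2π)) ∫_ℝ e^{it}·(ε + it)^{−(k + 3/2)} dt = 2^{k+1} / (√π · (2k+1)‼). -/
open MeasureTheory Filter Topology

/-!
The function `t ↦ t ^ (a - 1)` on `(0, ∞)` has Laplace transform `Γ(a) z ^ (-a)`: this is Euler's
integral for real `z > 0`, and both sides are holomorphic in the right half plane. The Laplace
transform along the line `Re z = ε` is the Fourier transform of `t ↦ exp (-ε t) t ^ (a - 1)`, so for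
`Re a > 1`, where `z ^ (-a)` is integrable on that line, Fourier inversion evaluates the integral at
frequency `x` as `2π exp (-ε x) x ^ (a - 1) / Γ(a)`, which is continuous in `ε`.
-/

section

open Complex Set FourierTransform

variable {E : Type*} [NormedAddCommGroup E] [NormedSpace ℂ E] {f : ℝ → E}

/-- The one-sided Laplace transform `z ↦ ∫₀^∞ exp (-z t) f(t) dt`. It is `0` where the integral
does not converge absolutely; compare `LaplaceConvergent`. -/
noncomputable def laplaceTransform (f : ℝ → E) (z : ℂ) : E :=
  ∫ t : ℝ in Ioi 0, exp (-(z * t)) • f t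

/-- Absolute convergence of the integral defining `laplaceTransform f z`. -/
def LaplaceConvergent (f : ℝ → E) (z : ℂ) : Prop :=
  IntegrableOn (fun t : ℝ => exp (-(z * t)) • f t) (Ioi 0)

theorem exp_neg_mul_mul_le {b c x t : ℝ} (hcb : c < b) (hbx : b ≤ x) (ht : 0 ≤ t) :
    Real.exp (-(x * t)) * t ≤ (b - c)⁻¹ * Real.exp (-(c * t)) := by
  have hlin : t ≤ (b - c)⁻¹ * Real.exp ((b - c) * t) := by
    rw [inv_mul_eq_div, le_div_iff₀' (sub_pos.2 hcb)]
    linarith [Real.add_one_le_exp ((b - c) * t)]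
  calc Real.exp (-(x * t)) * t
      ≤ Real.exp (-(b * t)) * ((b - c)⁻¹ * Real.exp ((b - c) * t)) := by gcongr
    _ = (b - c)⁻¹ * Real.exp (-(c * t)) := by
        rw [mul_left_comm, ← Real.exp_add]
        ring_nf

namespace LaplaceConvergent

theorem of_re_le {z w : ℂ} (hf : LaplaceConvergent f z) (hzw : z.re ≤ w.re) :
    LaplaceConvergent f w := by
  have hsplit : (fun t : ℝ => exp (-(w * t)) • f t) =
      fun t : ℝ => exp (-((w - z) * t)) • exp (-(z * t)) • f t := by
    ext t
    rw [smul_smul, ← exp_add]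
    ring_nf
  rw [LaplaceConvergent, hsplit]
  refine Integrable.bdd_smul hf 1 (Continuous.aestronglyMeasurable (by fun_prop)) ?_
  filter_upwards [ae_restrict_mem measurableSet_Ioi] with t ht
  have : 0 ≤ (w.re - z.re) * t := mul_nonneg (sub_nonneg.2 hzw) (le_of_lt ht)
  simpa [norm_exp] using this

theorem hasDerivAt_laplaceTransform {c z : ℂ} (hf : LaplaceConvergent f c) (hcz : c.re < z.re) :
    HasDerivAt (laplaceTransform f) (laplaceTransform (fun t => -(t : ℂ) • f t) z) z := by
  obtain ⟨b, hcb, hbz⟩ := exists_between hcz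
  have hs : {w : ℂ | b < w.re} ∈ 𝓝 z :=
    (isOpen_lt continuous_const continuous_re).mem_nhds hbz
  have hmeas {w : ℂ} (hw : b < w.re) : AEStronglyMeasurable
      (fun t : ℝ => exp (-(w * t)) • f t) (volume.restrict (Ioi 0)) :=
    (hf.of_re_le (hcb.trans hw).le).aestronglyMeasurable
  refine (hasDerivAt_integral_of_dominated_loc_of_deriv_le
    (F := fun w (t : ℝ) => exp (-(w * t)) • f t)
    (F' := fun w (t : ℝ) => exp (-(w * t)) • -(t : ℂ) • f t)
    (bound := fun t : ℝ => (b - c.re)⁻¹ * ‖exp (-(c * t)) • f t‖)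
    hs ?_ (hf.of_re_le hcz.le) ?_ ?_ (hf.norm.const_mul _) ?_).2
  · filter_upwards [hs] with w hw using hmeas hw
  · simp only [smul_comm (exp _)]
    exact AEStronglyMeasurable.smul (Continuous.aestronglyMeasurable (by fun_prop)) (hmeas hbz)
  · filter_upwards [ae_restrict_mem measurableSet_Ioi] with t (ht : 0 < t) w hw
    have hnorm := mul_le_mul_of_nonneg_right
      (exp_neg_mul_mul_le hcb (le_of_lt hw) ht.le) (norm_nonneg (f t))
    simpa [norm_smul, norm_exp, abs_of_pos ht, mul_assoc] using hnorm
  · filter_upwards with t w _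
    have hlin : HasDerivAt (fun w : ℂ => -(w * t)) (-(t : ℂ)) w := by
      simpa using ((hasDerivAt_id w).mul_const (t : ℂ)).fun_neg
    simpa only [smul_smul] using hlin.cexp.smul_const (f t)

end LaplaceConvergent

theorem fourier_indicator_exp_smul (f : ℝ → E) (ε w : ℝ) :
    𝓕 ((Ioi 0).indicator fun t : ℝ => exp (-(ε * t)) • f t) w =
      laplaceTransform f (ε + I * (2 * Real.pi * w : ℝ)) := by
  rw [Real.fourier_real_eq_integral_exp_smul, laplaceTransform,
    ← integral_indicator measurableSet_Ioi]
  congr 1 with t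
  rw [← indicator_const_smul_apply, indicator_apply, indicator_apply]
  congr 1
  rw [smul_smul, ← exp_add]
  push_cast
  ring_nf

/-- Bromwich's inversion formula, with the factor `exp (ε x)` moved to the right-hand side. -/
theorem integral_exp_smul_laplaceTransform [CompleteSpace E] {ε x : ℝ} (hx : 0 < x)
    (hf : LaplaceConvergent f ε)
    (hLf : Integrable fun t : ℝ => laplaceTransform f (ε + I * t)) (hfx : ContinuousAt f x) :
    (1 / (2 * (Real.pi : ℂ))) • ∫ t : ℝ, exp (I * (x * t)) • laplaceTransform f (ε + I * t) =
      exp (-(ε * x)) • f x := by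
  set g : ℝ → E := (Ioi 0).indicator fun t : ℝ => exp (-(ε * t)) • f t
  have hgf : g =ᶠ[𝓝 x] fun t : ℝ => exp (-(ε * t)) • f t := by
    filter_upwards [lt_mem_nhds hx] with t ht using indicator_of_mem ht _
  have hgx : ContinuousAt g x :=
    ContinuousAt.congr (ContinuousAt.smul (by fun_prop) hfx) hgf.symm
  have hFg : 𝓕 g = fun w : ℝ => laplaceTransform f (ε + I * (2 * Real.pi * w : ℝ)) :=
    funext (fourier_indicator_exp_smul f ε)
  have hFg_int : Integrable (𝓕 g) := hFg ▸ hLf.comp_mul_left' Real.two_pi_pos.ne'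
  calc (1 / (2 * (Real.pi : ℂ))) • ∫ t : ℝ, exp (I * (x * t)) • laplaceTransform f (ε + I * t)
      = ∫ w : ℝ, exp (I * (x * (2 * Real.pi * w : ℝ))) •
          laplaceTransform f (ε + I * (2 * Real.pi * w : ℝ)) := by
        rw [Measure.integral_comp_mul_left
          (fun t : ℝ => exp (I * (x * t)) • laplaceTransform f (ε + I * t)),
          abs_of_pos (inv_pos.2 Real.two_pi_pos), ← Complex.coe_smul]
        simp
    _ = 𝓕⁻ (𝓕 g) x := by
        rw [Real.fourierInv_eq', hFg]
        congr 1 with w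
        simp only [RCLike.inner_apply, conj_trivial]
        push_cast
        ring_nf
    _ = g x := ((integrable_indicator_iff measurableSet_Ioi).2 hf).fourierInv_fourier_eq hFg_int hgx
    _ = exp (-(ε * x)) • f x := hgf.eq_of_nhds

theorem laplaceConvergent_cpow {a z : ℂ} (ha : 0 < a.re) (hz : 0 < z.re) :
    LaplaceConvergent (fun t : ℝ => (t : ℂ) ^ (a - 1)) z := by
  have hcpow : ContinuousOn (fun t : ℝ => (t : ℂ) ^ (a - 1)) (Ioi 0) := fun t ht =>
    (continuousAt_ofReal_cpow_const t (a - 1) (.inr (ne_of_gt ht))).continuousWithinAt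
  have hcont : ContinuousOn (fun t : ℝ => exp (-(z * t)) • (t : ℂ) ^ (a - 1)) (Ioi 0) := by
    fun_prop
  have hdom := integrableOn_rpow_mul_exp_neg_mul_rpow (s := a.re - 1) (by linarith) one_pos hz
  refine hdom.mono' (hcont.aestronglyMeasurable measurableSet_Ioi) ?_
  filter_upwards [ae_restrict_mem measurableSet_Ioi] with t ht
  simp [norm_cpow_eq_rpow_re_of_pos ht, norm_exp, mul_comm]

theorem laplaceTransform_cpow {a z : ℂ} (ha : 0 < a.re) (hz : 0 < z.re) :
    laplaceTransform (fun t : ℝ => (t : ℂ) ^ (a - 1)) z = Gamma a * z ^ (-a) := by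
  set L := laplaceTransform fun t : ℝ => (t : ℂ) ^ (a - 1) with hL_def
  have hU : IsOpen {w : ℂ | 0 < w.re} := isOpen_lt continuous_const continuous_re
  have hL : DifferentiableOn ℂ L {w | 0 < w.re} := fun w (hw : 0 < w.re) =>
    ((laplaceConvergent_cpow (z := (w.re / 2 : ℝ)) ha (by simpa using hw)
      ).hasDerivAt_laplaceTransform (by simpa using hw)).differentiableAt.differentiableWithinAt
  have hpow : DifferentiableOn ℂ (fun w : ℂ => Gamma a * w ^ (-a)) {w | 0 < w.re} := fun w hw =>
    ((differentiableAt_id.cpow_const (.inl hw)).const_mul _).differentiableWithinAt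
  have heuler {r : ℝ} (hr : 0 < r) : L r = Gamma a * (r : ℂ) ^ (-a) := by
    simp only [hL_def, laplaceTransform, smul_eq_mul, mul_comm (exp _)]
    rw [Complex.integral_cpow_mul_exp_neg_mul_Ioi ha hr, one_div, inv_cpow, cpow_neg, mul_comm]
    simpa [arg_ofReal_of_nonneg hr.le] using Real.pi_ne_zero.symm
  have hreal : Tendsto (fun r : ℝ => (r : ℂ)) (𝓝[≠] 1) (𝓝[≠] 1) :=
    continuous_ofReal.continuousWithinAt.tendsto_nhdsWithin fun r hr => by simpa using hr
  refine (hL.analyticOnNhd hU).eqOn_of_preconnected_of_frequently_eq (hpow.analyticOnNhd hU)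
    (convex_halfSpace_re_gt 0).isPreconnected (z₀ := 1) (by simp) (hreal.frequently ?_) hz
  refine Eventually.frequently ?_
  filter_upwards [nhdsWithin_le_nhds (lt_mem_nhds one_pos)] with r hr using heuler hr

theorem mul_one_add_norm_le_norm_add_I_mul {ε : ℝ} (hε : 0 < ε) (t : ℝ) :
    ε / (1 + ε) * (1 + ‖t‖) ≤ ‖(ε : ℂ) + I * t‖ := by
  have hre : ε ≤ ‖(ε : ℂ) + I * t‖ := by
    simpa [abs_of_pos hε] using abs_re_le_norm ((ε : ℂ) + I * t)
  have him : ‖t‖ ≤ ‖(ε : ℂ) + I * t‖ := by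
    simpa using abs_im_le_norm ((ε : ℂ) + I * t)
  rw [div_mul_eq_mul_div, div_le_iff₀ (by positivity)]
  nlinarith

theorem norm_cpow_le_rpow_mul_exp (z s : ℂ) :
    ‖z ^ s‖ ≤ ‖z‖ ^ s.re * Real.exp (Real.pi * |s.im|) := by
  have harg : -(arg z * s.im) ≤ Real.pi * |s.im| :=
    (neg_le_abs _).trans (abs_mul (arg z) s.im ▸ by gcongr; exact abs_arg_le_pi z)
  calc ‖z ^ s‖ ≤ ‖z‖ ^ s.re / Real.exp (arg z * s.im) := norm_cpow_le z s
    _ = ‖z‖ ^ s.re * Real.exp (-(arg z * s.im)) := by rw [Real.exp_neg, div_eq_mul_inv]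
    _ ≤ ‖z‖ ^ s.re * Real.exp (Real.pi * |s.im|) := by gcongr

theorem integrable_add_I_mul_cpow {s : ℂ} {ε : ℝ} (hs : s.re < -1) (hε : 0 < ε) :
    Integrable fun t : ℝ => ((ε : ℂ) + I * t) ^ s := by
  have hcont : Continuous fun t : ℝ => ((ε : ℂ) + I * t) ^ s :=
    Continuous.cpow (by fun_prop) continuous_const fun t => .inl (by simpa using hε)
  have hdom : Integrable fun t : ℝ => (1 + ‖t‖) ^ s.re := by
    simpa using integrable_one_add_norm (E := ℝ) (μ := volume) (r := -s.re)
      (by simpa using lt_neg_of_lt_neg hs)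
  refine ((hdom.const_mul ((ε / (1 + ε)) ^ s.re)).mul_const
    (Real.exp (Real.pi * |s.im|))).mono' hcont.aestronglyMeasurable (.of_forall fun t => ?_)
  refine (norm_cpow_le_rpow_mul_exp _ s).trans ?_
  rw [← Real.mul_rpow (by positivity) (by positivity)]
  gcongr ?_ * _
  exact Real.rpow_le_rpow_of_nonpos (by positivity) (mul_one_add_norm_le_norm_add_I_mul hε t)
    (by linarith)

theorem integral_exp_mul_add_I_mul_cpow_neg {a : ℂ} {ε x : ℝ} (ha : 1 < a.re) (hε : 0 < ε)
    (hx : 0 < x) :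
    1 / (2 * (Real.pi : ℂ)) * ∫ t : ℝ, exp (I * (x * t)) * ((ε : ℂ) + I * t) ^ (-a) =
      exp (-(ε * x)) * x ^ (a - 1) / Gamma a := by
  have ha₀ : 0 < a.re := one_pos.trans ha
  have hL (t : ℝ) : laplaceTransform (fun t : ℝ => (t : ℂ) ^ (a - 1)) (ε + I * t) =
      Gamma a * ((ε : ℂ) + I * t) ^ (-a) :=
    laplaceTransform_cpow ha₀ (by simpa using hε)
  have hinv := integral_exp_smul_laplaceTransform hx
    (laplaceConvergent_cpow ha₀ (by simpa using hε))
    (by simpa only [hL] using (integrable_add_I_mul_cpow (by simpa using ha) hε).const_mul _)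
    (continuousAt_ofReal_cpow_const x (a - 1) (.inr hx.ne'))
  simp only [hL, smul_eq_mul, mul_left_comm _ (Gamma a), integral_const_mul] at hinv
  rw [eq_div_iff (Gamma_ne_zero_of_re_pos ha₀), mul_comm, hinv]

theorem limit_integral_half_integer_general {a : ℂ} {x : ℝ} (ha : 1 < a.re) (hx : 0 < x) :
    Tendsto (fun ε : ℝ => 1 / (2 * (Real.pi : ℂ)) *
        ∫ t : ℝ, exp (I * (x * t)) * ((ε : ℂ) + I * t) ^ (-a))
      (𝓝[>] 0) (𝓝 (x ^ (a - 1) / Gamma a)) := by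
  have hlim : Tendsto (fun ε : ℝ => exp (-(ε * x)) * x ^ (a - 1) / Gamma a)
      (𝓝[>] 0) (𝓝 (exp (-((0 : ℝ) * x)) * x ^ (a - 1) / Gamma a)) :=
    (Continuous.tendsto (by fun_prop) 0).mono_left nhdsWithin_le_nhds
  rw [ofReal_zero, zero_mul, neg_zero, exp_zero, one_mul] at hlim
  refine hlim.congr' ?_
  filter_upwards [self_mem_nhdsWithin] with ε hε
  exact (integral_exp_mul_add_I_mul_cpow_neg ha hε hx).symm

theorem Gamma_natCast_add_three_halves (k : ℕ) :
    Gamma ((k : ℂ) + 3 / 2) =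
      (Real.sqrt Real.pi : ℂ) * (Nat.doubleFactorial (2 * k + 1) : ℂ) / 2 ^ (k + 1) := by
  have hreal : (k : ℂ) + 3 / 2 = ((k + 1 + 1 / 2 : ℝ) : ℂ) := by
    push_cast
    ring
  rw [hreal, Gamma_ofReal, Real.Gamma_nat_add_one_add_half, mul_comm]
  push_cast
  rfl

end

/-- For every natural number `k`,
`lim_{ε→0⁺} (1/(2π)) ∫_ℝ e^{it} (ε + it)^{−(k+3/2)} dt = 2^{k+1}/(√π (2k+1)‼)`. -/
theorem limit_integral_half_integer (k : ℕ) :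
    Tendsto (fun ε : ℝ => (1 / (2 * (Real.pi : ℂ))) *
        ∫ t : ℝ, Complex.exp (Complex.I * t) *
          ((ε : ℂ) + Complex.I * t) ^ (-((k : ℂ) + 3 / 2)))
      (𝓝[>] 0)
      (𝓝 ((2 : ℂ) ^ (k + 1) /
        ((Real.sqrt Real.pi : ℂ) * (Nat.doubleFactorial (2 * k + 1) : ℂ)))) := by
  have hk : 1 < ((k : ℂ) + 3 / 2).re := by
    have : (1 : ℝ) < k + 3 / 2 := by linarith [k.cast_nonneg (α := ℝ)]
    simpa using this
  simpa [Gamma_natCast_add_three_halves] using limit_integral_half_integer_general hk one_pos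
end

section
/- For every real s with 0 < s < 1 and every Schwartz function φ : ℝ → ℂ, lim_{ε→0⁺} ∫_ℝ φ(x)·(ε + ix)^{−s} dx = ∫_ℝ φ(x)·(ix)^{−s} dx, where both complex powers are taken with respect to the principal branch and both integrals converge absolutely. -/
open MeasureTheory Filter Topology

/-!
On the line `Re z = ε` with `|ε| ≤ A` one has `|x| ≤ ‖ε + ix‖ ≤ A + |x|`, so whatever the sign of
`Re w`, the power `(ε + ix) ^ w` is dominated by a multiple of `A ^ Re w + |x| ^ Re w`, uniformly
in `ε`. For `Re w > -1` the singularity at the origin is integrable and the decay of a Schwartz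
function takes care of infinity. For `x ≠ 0` the point `ix` lies off the branch cut, so the
integrands converge pointwise and dominated convergence applies.
-/

/-- The majorant of `(ε + ix) ^ w` for `|ε| ≤ A` used in the dominated convergence argument.
The exponential accounts for the argument of the base, and the power of `2` for the comparison of
`(A + |x|) ^ Re w` with `A ^ Re w + |x| ^ Re w`. -/
noncomputable def cpowMajorant (w : ℂ) (A x : ℝ) : ℝ :=
  Real.exp (Real.pi * |w.im|) * (2 ^ |w.re| * (A ^ w.re + |x| ^ w.re))

theorem norm_cpow_le_exp_mul_norm_rpow (z w : ℂ) :
    ‖z ^ w‖ ≤ Real.exp (Real.pi * |w.im|) * ‖z‖ ^ w.re := by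
  have harg : -(z.arg * w.im) ≤ Real.pi * |w.im| := calc
    -(z.arg * w.im) ≤ |z.arg| * |w.im| := by
      rw [← abs_mul]
      exact neg_le_abs _
    _ ≤ Real.pi * |w.im| := by
      gcongr
      exact Complex.abs_arg_le_pi z
  calc
    ‖z ^ w‖ ≤ ‖z‖ ^ w.re / Real.exp (z.arg * w.im) := Complex.norm_cpow_le z w
    _ = Real.exp (-(z.arg * w.im)) * ‖z‖ ^ w.re := by rw [Real.exp_neg, div_eq_inv_mul]
    _ ≤ Real.exp (Real.pi * |w.im|) * ‖z‖ ^ w.re := by gcongr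

theorem rpow_le_two_rpow_abs_mul_add_rpow {A a t : ℝ} (p : ℝ) (hA : 0 ≤ A) (ha : 0 < a)
    (hat : a ≤ t) (htA : t ≤ A + a) : t ^ p ≤ 2 ^ |p| * (A ^ p + a ^ p) := by
  have hAp : 0 ≤ A ^ p := Real.rpow_nonneg hA p
  have hap : 0 ≤ a ^ p := Real.rpow_nonneg ha.le p
  rcases le_total 0 p with hp | hp
  · have hmax : max A a ^ p ≤ A ^ p + a ^ p := by
      rcases max_choice A a with h | h <;> rw [h] <;> linarith
    calc
      t ^ p ≤ (2 * max A a) ^ p :=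
        Real.rpow_le_rpow (ha.le.trans hat)
          (by linarith [le_max_left A a, le_max_right A a]) hp
      _ = 2 ^ |p| * max A a ^ p := by
        rw [Real.mul_rpow zero_le_two (hA.trans (le_max_left A a)), abs_of_nonneg hp]
      _ ≤ 2 ^ |p| * (A ^ p + a ^ p) := by gcongr
  · calc
      t ^ p ≤ a ^ p := Real.rpow_le_rpow_of_nonpos ha hat hp
      _ ≤ A ^ p + a ^ p := le_add_of_nonneg_left hAp
      _ ≤ 2 ^ |p| * (A ^ p + a ^ p) :=
        le_mul_of_one_le_left (add_nonneg hAp hap)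
          (Real.one_le_rpow one_le_two (abs_nonneg p))

theorem norm_add_I_mul_cpow_le_cpowMajorant {A ε x : ℝ} (w : ℂ) (hε : |ε| ≤ A) (hx : x ≠ 0) :
    ‖((ε : ℂ) + Complex.I * x) ^ w‖ ≤ cpowMajorant w A x := by
  have hlower : |x| ≤ ‖(ε : ℂ) + Complex.I * x‖ := by
    simpa using Complex.abs_im_le_norm ((ε : ℂ) + Complex.I * x)
  have hupper : ‖(ε : ℂ) + Complex.I * x‖ ≤ A + |x| := calc
    ‖(ε : ℂ) + Complex.I * x‖ ≤ |ε| + |x| := by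
      simpa using norm_add_le (ε : ℂ) (Complex.I * x)
    _ ≤ A + |x| := by gcongr
  refine (norm_cpow_le_exp_mul_norm_rpow _ w).trans
    (mul_le_mul_of_nonneg_left ?_ (Real.exp_nonneg _))
  exact rpow_le_two_rpow_abs_mul_add_rpow w.re ((abs_nonneg ε).trans hε) (abs_pos.2 hx)
    hlower hupper

theorem tendsto_add_I_mul_cpow {x : ℝ} (w : ℂ) (hx : x ≠ 0) :
    Tendsto (fun ε : ℝ => ((ε : ℂ) + Complex.I * x) ^ w) (𝓝 0) (𝓝 ((Complex.I * x) ^ w)) := by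
  have hslit : ((0 : ℝ) : ℂ) + Complex.I * x ∈ Complex.slitPlane := Or.inr (by simpa using hx)
  have hcont : ContinuousAt (fun ε : ℝ => ((ε : ℂ) + Complex.I * x) ^ w) 0 :=
    ContinuousAt.cpow (by fun_prop) continuousAt_const hslit
  simpa using hcont.tendsto

section DominatedConvergence

variable {E : Type*} [NormedAddCommGroup E] {μ : Measure ℝ} {w : ℂ} {f : ℝ → E}

theorem integrable_cpowMajorant_mul_norm (hf : Integrable f μ)
    (hfw : Integrable (fun x => |x| ^ w.re * ‖f x‖) μ) (A : ℝ) :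
    Integrable (fun x => cpowMajorant w A x * ‖f x‖) μ := by
  simp only [cpowMajorant, mul_assoc, add_mul]
  exact (((hf.norm.const_mul (A ^ w.re)).add hfw).const_mul _).const_mul _

variable [NormedSpace ℂ E]

theorem aestronglyMeasurable_add_I_mul_cpow_smul (hf : AEStronglyMeasurable f μ) (w : ℂ) (ε : ℝ) :
    AEStronglyMeasurable (fun x : ℝ => ((ε : ℂ) + Complex.I * x) ^ w • f x) μ :=
  (Measurable.aestronglyMeasurable (by fun_prop)).smul hf

variable [NullSingletonClass μ]

theorem ae_norm_add_I_mul_cpow_smul_le {A ε : ℝ} (w : ℂ) (f : ℝ → E) (hε : |ε| ≤ A) :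
    ∀ᵐ x : ℝ ∂μ, ‖((ε : ℂ) + Complex.I * x) ^ w • f x‖ ≤ cpowMajorant w A x * ‖f x‖ := by
  filter_upwards [Measure.ae_ne μ 0] with x hx
  rw [norm_smul]
  gcongr
  exact norm_add_I_mul_cpow_le_cpowMajorant w hε hx

theorem integrable_add_I_mul_cpow_smul (hf : Integrable f μ)
    (hfw : Integrable (fun x => |x| ^ w.re * ‖f x‖) μ) (ε : ℝ) :
    Integrable (fun x : ℝ => ((ε : ℂ) + Complex.I * x) ^ w • f x) μ :=
  (integrable_cpowMajorant_mul_norm hf hfw |ε|).mono'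
    (aestronglyMeasurable_add_I_mul_cpow_smul hf.aestronglyMeasurable w ε)
    (ae_norm_add_I_mul_cpow_smul_le w f le_rfl)

theorem tendsto_integral_add_I_mul_cpow_smul (hf : Integrable f μ)
    (hfw : Integrable (fun x => |x| ^ w.re * ‖f x‖) μ) :
    Tendsto (fun ε : ℝ => ∫ x : ℝ, ((ε : ℂ) + Complex.I * x) ^ w • f x ∂μ) (𝓝 0)
      (𝓝 (∫ x : ℝ, (Complex.I * x) ^ w • f x ∂μ)) := by
  have hsmall : ∀ᶠ ε : ℝ in 𝓝 0, |ε| ≤ 1 :=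
    continuous_abs.continuousAt.eventually_le_const (by simp)
  refine tendsto_integral_filter_of_dominated_convergence _
    (Eventually.of_forall
      (aestronglyMeasurable_add_I_mul_cpow_smul hf.aestronglyMeasurable w))
    (hsmall.mono fun ε hε => ae_norm_add_I_mul_cpow_smul_le w f hε)
    (integrable_cpowMajorant_mul_norm hf hfw 1) ?_
  filter_upwards [Measure.ae_ne μ 0] with x hx
  exact (tendsto_add_I_mul_cpow w hx).smul_const (f x)

end DominatedConvergence

section Schwartz

variable {D : Type*} [NormedAddCommGroup D] [NormedSpace ℝ D] [FiniteDimensional ℝ D]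
  [Nontrivial D] [MeasurableSpace D] [BorelSpace D] {μ : Measure D} [μ.IsAddHaarMeasure] {p : ℝ}

theorem locallyIntegrable_norm_rpow (hp : -(Module.finrank ℝ D : ℝ) < p) :
    LocallyIntegrable (fun x : D => ‖x‖ ^ p) μ := by
  refine locallyIntegrable_of_norm_le_rpow (C := 1) (α := -p) Module.finrank_pos (by linarith)
    (Eventually.of_forall fun x => ?_) (Measurable.aestronglyMeasurable (by fun_prop))
  rw [one_mul, neg_neg, Real.norm_of_nonneg (Real.rpow_nonneg (norm_nonneg x) p)]

theorem integrable_norm_rpow_mul_norm_schwartz {E : Type*} [NormedAddCommGroup E]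
    [NormedSpace ℝ E] (hp : -(Module.finrank ℝ D : ℝ) < p) (φ : SchwartzMap D E) :
    Integrable (fun x => ‖x‖ ^ p * ‖φ x‖) μ := by
  have hloc : LocallyIntegrable (fun x => ‖x‖ ^ p * ‖φ x‖) μ :=
    (locallyIntegrable_norm_rpow hp).mul_continuous φ.continuous.norm
  have hdecay : (fun x => ‖x‖ ^ p * ‖φ x‖) =O[cocompact D] fun x => ‖x‖ ^ ⌈p⌉₊ * ‖φ x‖ := by
    refine Asymptotics.IsBigO.of_bound' ?_
    filter_upwards [tendsto_norm_cocompact_atTop.eventually_ge_atTop 1] with x hx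
    rw [Real.norm_of_nonneg (by positivity), Real.norm_of_nonneg (by positivity),
      ← Real.rpow_natCast]
    gcongr
    exact Nat.le_ceil p
  exact hloc.integrable_of_isBigO_cocompact hdecay
    ((φ.integrable_pow_mul μ ⌈p⌉₊).integrableAtFilter _)

end Schwartz

theorem tendsto_integral_schwartz_cpow_general {E : Type*} [NormedAddCommGroup E]
    [NormedSpace ℂ E] {w : ℂ} (hw : -1 < w.re) (φ : SchwartzMap ℝ E) :
    (∀ ε : ℝ, Integrable (fun x : ℝ => ((ε : ℂ) + Complex.I * x) ^ w • φ x)) ∧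
    Integrable (fun x : ℝ => (Complex.I * x) ^ w • φ x) ∧
    Tendsto (fun ε : ℝ => ∫ x : ℝ, ((ε : ℂ) + Complex.I * x) ^ w • φ x)
      (𝓝 0) (𝓝 (∫ x : ℝ, (Complex.I * x) ^ w • φ x)) := by
  have hφw : Integrable (fun x : ℝ => |x| ^ w.re * ‖φ x‖) :=
    integrable_norm_rpow_mul_norm_schwartz (by simpa using hw) φ
  have hint := integrable_add_I_mul_cpow_smul φ.integrable hφw
  exact ⟨hint, by simpa using hint 0, tendsto_integral_add_I_mul_cpow_smul φ.integrable hφw⟩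

/-- For every real `0 < s < 1` and every Schwartz function `φ : ℝ → ℂ`, both integrals
`∫ φ(x) (ε + ix)^{−s} dx` and `∫ φ(x) (ix)^{−s} dx` converge absolutely and
`lim_{ε→0⁺} ∫_ℝ φ(x) (ε + ix)^{−s} dx = ∫_ℝ φ(x) (ix)^{−s} dx`. -/
theorem tendsto_integral_schwartz_cpow (s : ℝ) (hs0 : 0 < s) (hs1 : s < 1)
    (φ : SchwartzMap ℝ ℂ) :
    (∀ ε : ℝ, 0 < ε → Integrable (fun x : ℝ =>
        φ x * ((ε : ℂ) + Complex.I * x) ^ (-(s : ℂ)))) ∧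
    Integrable (fun x : ℝ => φ x * (Complex.I * x) ^ (-(s : ℂ))) ∧
    Tendsto (fun ε : ℝ =>
        ∫ x : ℝ, φ x * ((ε : ℂ) + Complex.I * x) ^ (-(s : ℂ)))
      (𝓝[>] 0) (𝓝 (∫ x : ℝ, φ x * (Complex.I * x) ^ (-(s : ℂ)))) := by
  obtain ⟨hint, hint₀, hlim⟩ :=
    tendsto_integral_schwartz_cpow_general (w := -s) (by simpa using hs1) φ
  simpa only [smul_eq_mul, mul_comm (φ _)] using
    ⟨fun ε _ => hint ε, hint₀, hlim.mono_left nhdsWithin_le_nhds⟩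
end
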